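/- arXiv:1012.4146 — 9 statements merged into one kernel-verified Lean document; each statement's English description precedes it below -/
import Mathlib

section
/- Let 1 ≤ n ≤ 8 and let ξ ∈ L_n satisfy ξ·ξ = −2 and K_0·ξ = 0. Then there exists a finite composition φ of reflections taken from {R(E_i − E_j) : i ≠ j} ∪ {Γ_{ijk} : i, j, k distinct} such that φ(ξ) is a binary class E_i − E_j or a ternary class H − E_i − E_j − E_k. Moreover, if n ≠ 3, or if n = 3 and ξ is neither H − E_1 − E_2 − E_3 nor −(H − E_1 − E_2 − E_3), then φ can be chosen so that φ(ξ) = E_1 − E_2. -/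
/-!
Write a root as `ξ = aH - ∑ bᵢ Eᵢ`, so that `∑ bᵢ = 3a` and `∑ bᵢ² = a² + 2`. Replacing `ξ` by `-ξ`
(reflections are odd, and `E_i - E_j` is negated by its own reflection) one may assume `a ≥ 0`.

Cauchy-Schwarz with `n ≤ 8` gives `a ≤ 4`, and `a = 4` is excluded because then
`∑ (bᵢ - 1)(bᵢ - 2) = 2n - 18 < 0`, although no term is negative (`IsRoot.head_le`). For `a = 0`
the class is binary (`IsRoot.binary`). For `a ≥ 1`, sums of this kind (`IsRoot.sum_quad`) pin down
the remaining coefficients: for `a = 1` the class is ternary (`IsRoot.ternary`); for `a = 2` six of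
the `bᵢ` equal `1` and the others vanish; for `a = 3` one `bᵢ` is `2` and seven are `1`. In the last
two cases three of the `bᵢ` add up to `a + 1`, and the corresponding ternary reflection lowers `a`
by one (`IsRoot.lower`), so such a root reaches a ternary class (`IsRoot.classify`).

Binary reflections act transitively on binary classes, and for `n ≥ 4` a ternary class is carried to
a binary one by a ternary reflection sharing two of its indices. For `n = 3` the only ternary
class is the exceptional one, and for `n ≤ 2` there is none.
-/

namespace LiWuRational

/-- The intersection pairing on the lattice `L_n` of `CP² # n(conj CP²)`:
coordinate `0` is the `H`-coefficient, coordinate `i+1` is the coefficient of `E_{i+1}`.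
`x·y = x_H y_H - ∑ x_{E_i} y_{E_i}`. -/
def form (n : ℕ) (x y : Fin (n + 1) → ℤ) : ℤ :=
  x 0 * y 0 - ∑ i : Fin n, x i.succ * y i.succ

/-- The hyperplane class `H`. -/
def H (n : ℕ) : Fin (n + 1) → ℤ := fun j => if (j : ℕ) = 0 then 1 else 0

/-- The exceptional class `E_{i+1}` (0-based index `i < n`). -/
def E (n : ℕ) (i : ℕ) : Fin (n + 1) → ℤ := fun j => if (j : ℕ) = i + 1 then 1 else 0

/-- The standard canonical class `K_0 = -3H + E_1 + ⋯ + E_n` (as a homology class via PD). -/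
def K0 (n : ℕ) : Fin (n + 1) → ℤ := fun j => if (j : ℕ) = 0 then -3 else 1

/-- The reflection along `γ`: `R(γ)(β) = β - (2(γ·β)/(γ·γ)) γ`.
For `γ·γ ∈ {1, -1, 2, -2}` dividing the relevant classes the integer division is exact. -/
def refl (n : ℕ) (γ β : Fin (n + 1) → ℤ) : Fin (n + 1) → ℤ :=
  β - (2 * form n γ β / form n γ γ) • γ

/-- Binary classes `E_i - E_j`, `i ≠ j`. -/
def IsBinary (n : ℕ) (γ : Fin (n + 1) → ℤ) : Prop :=
  ∃ i j : ℕ, i < n ∧ j < n ∧ i ≠ j ∧ γ = E n i - E n j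

/-- Ternary classes `H - E_i - E_j - E_k`, with `i, j, k` distinct. -/
def IsTernary (n : ℕ) (γ : Fin (n + 1) → ℤ) : Prop :=
  ∃ i j k : ℕ, i < n ∧ j < n ∧ k < n ∧ i ≠ j ∧ i ≠ k ∧ j ≠ k ∧
    γ = H n - E n i - E n j - E n k

/-! ### The form and its reflections -/

lemma form_add_left (n : ℕ) (x y z : Fin (n + 1) → ℤ) :
    form n (x + y) z = form n x z + form n y z := by
  simp only [form, Pi.add_apply, add_mul, Finset.sum_add_distrib]; ring

lemma form_smul_left (n : ℕ) (c : ℤ) (x z : Fin (n + 1) → ℤ) :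
    form n (c • x) z = c * form n x z := by
  simp only [form, Pi.smul_apply, smul_eq_mul, mul_assoc, ← Finset.mul_sum]; ring

lemma form_comm (n : ℕ) (x y : Fin (n + 1) → ℤ) : form n x y = form n y x := by
  simp only [form, mul_comm]

lemma form_neg_left (n : ℕ) (x z : Fin (n + 1) → ℤ) : form n (-x) z = -form n x z := by
  simpa using form_smul_left n (-1) x z

lemma form_sub_left (n : ℕ) (x y z : Fin (n + 1) → ℤ) :
    form n (x - y) z = form n x z - form n y z := by
  rw [sub_eq_add_neg, form_add_left, form_neg_left]; ring

lemma form_H_left (n : ℕ) (x : Fin (n + 1) → ℤ) : form n (H n) x = x 0 := by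
  simp [form, H]

lemma form_E_left (n : ℕ) (i : Fin n) (x : Fin (n + 1) → ℤ) :
    form n (E n i) x = -x i.succ := by
  simp [form, E, Fin.val_inj]

@[simp] lemma H_zero (n : ℕ) : H n 0 = 1 := by simp [H]

@[simp] lemma H_succ (n : ℕ) (i : Fin n) : H n i.succ = 0 := by simp [H]

@[simp] lemma E_zero (n i : ℕ) : E n i 0 = 0 := by simp [E]

@[simp] lemma E_succ (n : ℕ) (i j : Fin n) : E n i j.succ = if j = i then 1 else 0 := by
  simp [E, Fin.val_inj]

/-- A generator: a class along which the allowed reflections are taken. -/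
def IsGen (n : ℕ) (γ : Fin (n + 1) → ℤ) : Prop := IsBinary n γ ∨ IsTernary n γ

lemma isBinary_iff (n : ℕ) (γ : Fin (n + 1) → ℤ) :
    IsBinary n γ ↔ ∃ i j : Fin n, i ≠ j ∧ γ = E n i - E n j := by
  constructor
  · rintro ⟨i, j, hi, hj, hij, rfl⟩
    exact ⟨⟨i, hi⟩, ⟨j, hj⟩, by simpa using hij, rfl⟩
  · rintro ⟨i, j, hij, rfl⟩
    exact ⟨i, j, i.2, j.2, by simpa [Fin.val_inj] using hij, rfl⟩

lemma isTernary_iff (n : ℕ) (γ : Fin (n + 1) → ℤ) :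
    IsTernary n γ ↔ ∃ i j k : Fin n, i ≠ j ∧ i ≠ k ∧ j ≠ k ∧
      γ = H n - E n i - E n j - E n k := by
  constructor
  · rintro ⟨i, j, k, hi, hj, hk, hij, hik, hjk, rfl⟩
    exact ⟨⟨i, hi⟩, ⟨j, hj⟩, ⟨k, hk⟩, by simpa using hij, by simpa using hik,
      by simpa using hjk, rfl⟩
  · rintro ⟨i, j, k, hij, hik, hjk, rfl⟩
    exact ⟨i, j, k, i.2, j.2, k.2, by simpa [Fin.val_inj] using hij,
      by simpa [Fin.val_inj] using hik, by simpa [Fin.val_inj] using hjk, rfl⟩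

/-- A root of `L_n`: a class of square `-2` orthogonal to `K_0`. -/
structure IsRoot (n : ℕ) (ξ : Fin (n + 1) → ℤ) : Prop where
  sq : form n ξ ξ = -2
  ortho : form n (K0 n) ξ = 0

lemma form_K0_E (n : ℕ) (i : Fin n) : form n (E n i) (K0 n) = -1 := by
  rw [form_E_left]; simp [K0]

lemma IsGen.isRoot {n : ℕ} {γ : Fin (n + 1) → ℤ} (h : IsGen n γ) : IsRoot n γ := by
  rcases h with h | h
  · obtain ⟨i, j, hij, rfl⟩ := (isBinary_iff _ _).1 h
    refine ⟨?_, ?_⟩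
    · simp [form_sub_left, form_E_left, hij, hij.symm]
    · rw [form_comm]; simp [form_sub_left, form_K0_E]
  · obtain ⟨i, j, k, hij, hik, hjk, rfl⟩ := (isTernary_iff _ _).1 h
    refine ⟨?_, ?_⟩
    · simp [form_sub_left, form_E_left, form_H_left, hij, hij.symm, hik, hik.symm, hjk, hjk.symm]
    · rw [form_comm]; simp [form_sub_left, form_K0_E, form_H_left]; simp [K0]

lemma IsRoot.neg {n : ℕ} {ξ : Fin (n + 1) → ℤ} (h : IsRoot n ξ) : IsRoot n (-ξ) := by
  refine ⟨?_, ?_⟩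
  · rw [form_neg_left, form_comm, form_neg_left, h.sq]; ring
  · rw [form_comm, form_neg_left, form_comm, h.ortho]; ring

lemma refl_eq {n : ℕ} {γ : Fin (n + 1) → ℤ} (h : IsGen n γ) (β : Fin (n + 1) → ℤ) :
    refl n γ β = β + form n γ β • γ := by
  have : 2 * form n γ β / -2 = -form n γ β := by omega
  rw [refl, h.isRoot.sq, this]; simp

lemma IsRoot.refl {n : ℕ} {γ ξ : Fin (n + 1) → ℤ} (hγ : IsGen n γ) (h : IsRoot n ξ) :
    IsRoot n (refl n γ ξ) := by
  rw [refl_eq hγ]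
  refine ⟨?_, ?_⟩
  · rw [form_add_left, form_smul_left, form_comm n ξ, form_comm n γ (_ + _)]
    simp only [form_add_left, form_smul_left, h.sq, hγ.isRoot.sq, form_comm n ξ γ]
    ring
  · rw [form_comm, form_add_left, form_smul_left, form_comm, h.ortho, form_comm n γ (K0 n),
      hγ.isRoot.ortho]; ring

/-! ### Orbits under the allowed reflections -/

/-- `Reach n ξ η`: some finite composition of allowed reflections carries `ξ` to `η`. -/
def Reach (n : ℕ) : (Fin (n + 1) → ℤ) → (Fin (n + 1) → ℤ) → Prop :=
  Relation.ReflTransGen fun β β' => ∃ γ, IsGen n γ ∧ β' = refl n γ β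

lemma Reach.exists_list {n : ℕ} {ξ η : Fin (n + 1) → ℤ} (h : Reach n ξ η) :
    ∃ l : List ((Fin (n + 1) → ℤ) → (Fin (n + 1) → ℤ)),
      (∀ f ∈ l, ∃ γ, (IsBinary n γ ∨ IsTernary n γ) ∧ f = refl n γ) ∧
      l.foldr (· ∘ ·) id ξ = η := by
  induction h with
  | refl => exact ⟨[], by simp, rfl⟩
  | tail _ hs ih =>
    obtain ⟨l, hl, rfl⟩ := ih
    obtain ⟨γ, hγ, rfl⟩ := hs
    refine ⟨LiWuRational.refl n γ :: l, ?_, rfl⟩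
    intro f hf
    rcases List.mem_cons.1 hf with rfl | hf
    · exact ⟨γ, hγ, rfl⟩
    · exact hl f hf

lemma Reach.step {n : ℕ} {γ : Fin (n + 1) → ℤ} (hγ : IsGen n γ) (ξ : Fin (n + 1) → ℤ) :
    Reach n ξ (ξ + form n γ ξ • γ) :=
  Relation.ReflTransGen.single ⟨γ, hγ, (refl_eq hγ ξ).symm⟩

lemma Reach.trans {n : ℕ} {a b c : Fin (n + 1) → ℤ} (h : Reach n a b) (h' : Reach n b c) :
    Reach n a c := Relation.ReflTransGen.trans h h'

lemma Reach.neg {n : ℕ} {ξ η : Fin (n + 1) → ℤ} (h : Reach n ξ η) : Reach n (-ξ) (-η) := by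
  induction h with
  | refl => exact Relation.ReflTransGen.refl
  | @tail b c _ hs ih =>
    obtain ⟨γ, hγ, rfl⟩ := hs
    have h1 := Reach.step hγ (-b)
    rw [form_comm, form_neg_left, form_comm] at h1
    refine ih.trans ?_
    rw [refl_eq hγ, neg_add, ← neg_smul]
    exact h1

lemma Reach.gen_neg {n : ℕ} {γ : Fin (n + 1) → ℤ} (hγ : IsGen n γ) : Reach n γ (-γ) := by
  have h := Reach.step hγ γ
  rw [hγ.isRoot.sq] at h
  convert h using 1
  module

lemma isGen_binary {n : ℕ} {i j : Fin n} (hij : i ≠ j) : IsGen n (E n i - E n j) :=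
  Or.inl ((isBinary_iff _ _).2 ⟨i, j, hij, rfl⟩)

lemma isGen_ternary {n : ℕ} {i j k : Fin n} (hij : i ≠ j) (hik : i ≠ k) (hjk : j ≠ k) :
    IsGen n (H n - E n i - E n j - E n k) :=
  Or.inr ((isTernary_iff _ _).2 ⟨i, j, k, hij, hik, hjk, rfl⟩)

lemma reach_fst {n : ℕ} {i j k : Fin n} (hij : i ≠ j) (hkj : k ≠ j) :
    Reach n (E n i - E n j) (E n k - E n j) := by
  rcases eq_or_ne k i with rfl | hki
  · exact Relation.ReflTransGen.refl
  have h := Reach.step (isGen_binary hki) (E n i - E n j)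
  have : form n (E n k - E n i) (E n i - E n j) = 1 := by
    simp [form_sub_left, form_E_left, hki, hkj, hij]
  rw [this] at h
  convert h using 1
  module

lemma reach_swap {n : ℕ} {i j : Fin n} (hij : i ≠ j) :
    Reach n (E n i - E n j) (E n j - E n i) := by
  simpa using Reach.gen_neg (isGen_binary hij)

lemma reach_snd {n : ℕ} {i j k : Fin n} (hij : i ≠ j) (hik : i ≠ k) :
    Reach n (E n i - E n j) (E n i - E n k) :=
  (reach_swap hij).trans ((reach_fst hij.symm hik.symm).trans (reach_swap hik.symm))

/-- Binary reflections act transitively on binary classes. -/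
lemma reach_of_isBinary {n : ℕ} {ξ : Fin (n + 1) → ℤ} (h : IsBinary n ξ) :
    Reach n ξ (E n 0 - E n 1) := by
  obtain ⟨i, j, hij, rfl⟩ := (isBinary_iff _ _).1 h
  have hn : 2 ≤ n := by
    by_contra hn
    apply hij
    ext
    omega
  let p : Fin n := ⟨0, by omega⟩
  let q : Fin n := ⟨1, by omega⟩
  have hpq : p ≠ q := by simp [p, q]
  change Reach n _ (E n p - E n q)
  by_cases hj : p = j
  · subst hj
    exact (reach_swap hij).trans (reach_snd hij.symm hpq)
  · exact (reach_fst hij hj).trans (reach_snd hj hpq)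

lemma reach_of_isTernary {n : ℕ} (hn : 4 ≤ n) {ξ : Fin (n + 1) → ℤ} (h : IsTernary n ξ) :
    Reach n ξ (E n 0 - E n 1) := by
  obtain ⟨i, j, k, hij, hik, hjk, rfl⟩ := (isTernary_iff _ _).1 h
  obtain ⟨l, hl⟩ : ∃ l : Fin n, l ∉ ({i, j, k} : Finset (Fin n)) := by
    by_contra! hall
    have h1 : ({i, j, k} : Finset (Fin n)) = Finset.univ := Finset.eq_univ_iff_forall.2 hall
    have h2 := congrArg Finset.card h1
    rw [Finset.card_univ, Fintype.card_fin] at h2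
    have := Finset.card_le_three (a := i) (b := j) (c := k)
    omega
  simp only [Finset.mem_insert, Finset.mem_singleton, not_or] at hl
  obtain ⟨hli, hlj, hlk⟩ := hl
  have h := Reach.step (isGen_ternary hlj hlk hjk) (H n - E n i - E n j - E n k)
  have h1 : form n (H n - E n l - E n j - E n k) (H n - E n i - E n j - E n k) = -1 := by
    simp [form_sub_left, form_E_left, form_H_left, hli, hlj, hlk, hij.symm, hik.symm, hjk,
      hjk.symm]
  have h2 : H n - E n i - E n j - E n k + (-1 : ℤ) • (H n - E n l - E n j - E n k)
      = E n l - E n i := by module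
  rw [h1, h2] at h
  exact h.trans (reach_of_isBinary ((isBinary_iff _ _).2 ⟨l, i, hli, rfl⟩))

/-! ### Classification of roots -/

lemma IsRoot.sum {n : ℕ} {ξ : Fin (n + 1) → ℤ} (h : IsRoot n ξ) :
    ∑ i : Fin n, ξ i.succ = -3 * ξ 0 := by
  have := h.ortho
  simp [form, K0] at this
  linarith

lemma IsRoot.sum_sq {n : ℕ} {ξ : Fin (n + 1) → ℤ} (h : IsRoot n ξ) :
    ∑ i : Fin n, ξ i.succ ^ 2 = ξ 0 ^ 2 + 2 := by
  have := h.sq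
  simp only [form, ← pow_two] at this
  linarith

/-- With `bᵢ = -ξ i.succ`, the sum of `(bᵢ + u)(bᵢ + v)` depends only on the `H`-coefficient. -/
lemma IsRoot.sum_quad {n : ℕ} {ξ : Fin (n + 1) → ℤ} (h : IsRoot n ξ) (u v : ℤ) :
    ∑ i : Fin n, (-ξ i.succ + u) * (-ξ i.succ + v)
      = ξ 0 ^ 2 + 2 + 3 * (u + v) * ξ 0 + n * (u * v) := by
  have : ∀ i : Fin n, (-ξ i.succ + u) * (-ξ i.succ + v)
      = ξ i.succ ^ 2 - (u + v) * ξ i.succ + u * v := fun i => by ring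
  simp only [this, Finset.sum_add_distrib, Finset.sum_sub_distrib, ← Finset.mul_sum, h.sum,
    h.sum_sq, Finset.sum_const, Finset.card_univ, Fintype.card_fin, nsmul_eq_mul]
  ring

lemma IsRoot.head_le {n : ℕ} (hn1 : 1 ≤ n) (hn : n ≤ 8) {ξ : Fin (n + 1) → ℤ}
    (h : IsRoot n ξ) : ξ 0 ≤ 3 := by
  have hn' : (n : ℤ) ≤ 8 := by exact_mod_cast hn
  have hcs := sq_sum_le_card_mul_sum_sq (s := (Finset.univ : Finset (Fin n)))
    (f := fun i => ξ i.succ)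
  rw [h.sum, h.sum_sq, Finset.card_univ, Fintype.card_fin] at hcs
  have h4 : ξ 0 ≤ 4 := by nlinarith [sq_nonneg (ξ 0)]
  -- Every `(bᵢ - 1)(bᵢ - 2)` is nonnegative, being the product of two consecutive integers.
  have hpos : 0 ≤ ∑ i : Fin n, (-ξ i.succ + -1) * (-ξ i.succ + -2) := by
    refine Finset.sum_nonneg fun i _ => ?_
    rcases le_or_gt (-ξ i.succ) 1 with hb | hb
    · nlinarith
    · exact mul_nonneg (by omega) (by omega)
  rw [h.sum_quad] at hpos
  by_contra hlt
  have : ξ 0 = 4 := by omega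
  rw [this] at hpos
  omega

lemma IsRoot.binary {n : ℕ} {ξ : Fin (n + 1) → ℤ} (h : IsRoot n ξ) (h0 : ξ 0 = 0) :
    IsBinary n ξ := by
  have hs := h.sum
  have hq := h.sum_sq
  rw [h0] at hs hq
  have hne : ∃ i : Fin n, ξ i.succ ≠ 0 := by
    by_contra! hall
    simp [hall] at hq
  obtain ⟨i, -, hi⟩ : ∃ i ∈ (Finset.univ : Finset (Fin n)), 0 < ξ i.succ :=
    Finset.exists_pos_of_sum_zero_of_exists_nonzero _ (by simpa using hs) (by simpa using hne)
  obtain ⟨j, -, hj⟩ : ∃ j ∈ (Finset.univ : Finset (Fin n)), 0 < -ξ j.succ :=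
    Finset.exists_pos_of_sum_zero_of_exists_nonzero _ (by simpa using hs) (by simpa using hne)
  have hij : i ≠ j := by rintro rfl; omega
  refine (isBinary_iff _ _).2 ⟨i, j, hij, ?_⟩
  -- The coordinates of `ξ - (E_i - E_j)` have sum of squares `2 - 2(ξ_i - ξ_j) + 2 ≤ 0`.
  have hz : ∑ k : Fin n, (ξ k.succ - ((if k = i then 1 else 0) - (if k = j then 1 else 0))) ^ 2
      = 4 - 2 * (ξ i.succ - ξ j.succ) := by
    have : ∀ k : Fin n, (ξ k.succ - ((if k = i then 1 else 0) - (if k = j then 1 else 0))) ^ 2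
        = ξ k.succ ^ 2 - 2 * (if k = i then ξ k.succ else 0) + 2 * (if k = j then ξ k.succ else 0)
          + (if k = i then 1 else 0) + (if k = j then 1 else 0) := by
      intro k
      by_cases hki : k = i
      · subst hki; simp [hij]; ring
      · by_cases hkj : k = j
        · subst hkj; simp [hij.symm]; ring
        · simp [hki, hkj]
    simp only [this, Finset.sum_add_distrib, Finset.sum_sub_distrib, ← Finset.mul_sum, hq]
    simp
    ring
  have hz0 : ∑ k : Fin n,
      (ξ k.succ - ((if k = i then 1 else 0) - (if k = j then 1 else 0))) ^ 2 = 0 :=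
    le_antisymm (by rw [hz]; omega) (Finset.sum_nonneg fun _ _ => sq_nonneg _)
  rw [Finset.sum_eq_zero_iff_of_nonneg fun _ _ => sq_nonneg _] at hz0
  funext m
  refine Fin.cases ?_ (fun k => ?_) m
  · simp [h0]
  · have := pow_eq_zero_iff (two_ne_zero) |>.1 (hz0 k (Finset.mem_univ k))
    simp only [Pi.sub_apply, E_succ]
    omega

/-- For `a = 1` or `a = 2`, `∑ bᵢ(bᵢ - 1) = 0`, so each `bᵢ` is `0` or `1`, and `3a` of them
are `1`. -/
lemma IsRoot.zero_or_one {n : ℕ} {ξ : Fin (n + 1) → ℤ} (h : IsRoot n ξ)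
    (h0 : ξ 0 = 1 ∨ ξ 0 = 2) :
    (∀ i : Fin n, ξ i.succ = 0 ∨ ξ i.succ = -1) ∧
      ((Finset.univ.filter fun i : Fin n => ξ i.succ = -1).card : ℤ) = 3 * ξ 0 := by
  have hq := h.sum_quad 0 (-1)
  have hq0 : ∑ i : Fin n, (-ξ i.succ + 0) * (-ξ i.succ + -1) = 0 := by
    rw [hq]; rcases h0 with h0 | h0 <;> rw [h0] <;> ring
  have hnn : ∀ i ∈ (Finset.univ : Finset (Fin n)),
      0 ≤ (-ξ i.succ + 0) * (-ξ i.succ + -1) := by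
    intro i _
    rcases le_or_gt (-ξ i.succ) 0 with hb | hb
    · nlinarith
    · exact mul_nonneg (by omega) (by omega)
  rw [Finset.sum_eq_zero_iff_of_nonneg hnn] at hq0
  have hall : ∀ i : Fin n, ξ i.succ = 0 ∨ ξ i.succ = -1 := by
    intro i
    rcases mul_eq_zero.1 (hq0 i (Finset.mem_univ i)) with hb | hb
    · left; omega
    · right; omega
  refine ⟨hall, ?_⟩
  have hs := h.sum
  have : ∀ i : Fin n, ξ i.succ = -(if ξ i.succ = -1 then 1 else 0) := by
    intro i
    rcases hall i with hb | hb <;> simp [hb]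
  rw [Finset.sum_congr rfl fun i _ => this i, Finset.sum_neg_distrib, Finset.sum_boole] at hs
  linarith

lemma IsRoot.ternary {n : ℕ} {ξ : Fin (n + 1) → ℤ} (h : IsRoot n ξ) (h0 : ξ 0 = 1) :
    IsTernary n ξ := by
  obtain ⟨hall, hc⟩ := h.zero_or_one (Or.inl h0)
  rw [h0] at hc
  have hc' : (Finset.univ.filter fun i : Fin n => ξ i.succ = -1).card = 3 := by
    exact_mod_cast hc
  obtain ⟨i, j, k, hij, hik, hjk, hs⟩ := Finset.card_eq_three.1 hc'
  refine (isTernary_iff _ _).2 ⟨i, j, k, hij, hik, hjk, ?_⟩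
  funext m
  refine Fin.cases ?_ (fun l => ?_) m
  · simp [h0]
  · have hm := Finset.ext_iff.1 hs l
    simp only [Finset.mem_filter, Finset.mem_univ, true_and, Finset.mem_insert,
      Finset.mem_singleton] at hm
    simp only [Pi.sub_apply, E_succ, H_succ]
    have := hall l
    grind

/-- A ternary reflection along indices with `bᵢ + bⱼ + bₖ = a + 1` lowers the `H`-coefficient
by one. -/
lemma IsRoot.lower {n : ℕ} {ξ : Fin (n + 1) → ℤ} (h : IsRoot n ξ) {i j k : Fin n}
    (hij : i ≠ j) (hik : i ≠ k) (hjk : j ≠ k)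
    (hs : -ξ i.succ - ξ j.succ - ξ k.succ = ξ 0 + 1) :
    ∃ η, IsRoot n η ∧ Reach n ξ η ∧ η 0 = ξ 0 - 1 := by
  have hg := isGen_ternary hij hik hjk
  have hf : form n (H n - E n i - E n j - E n k) ξ = -1 := by
    simp only [form_sub_left, form_H_left, form_E_left]; omega
  have h1 := h.refl hg
  rw [refl_eq hg] at h1
  refine ⟨_, h1, Reach.step hg ξ, ?_⟩
  rw [hf]
  simp
  ring

lemma IsRoot.reach_of_two {n : ℕ} {ξ : Fin (n + 1) → ℤ} (h : IsRoot n ξ) (h0 : ξ 0 = 2) :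
    6 ≤ n ∧ ∃ η, IsTernary n η ∧ Reach n ξ η := by
  obtain ⟨-, hc⟩ := h.zero_or_one (Or.inr h0)
  rw [h0] at hc
  have hc' : (Finset.univ.filter fun i : Fin n => ξ i.succ = -1).card = 6 := by
    exact_mod_cast hc
  refine ⟨?_, ?_⟩
  · have := Finset.card_le_univ (Finset.univ.filter fun i : Fin n => ξ i.succ = -1)
    rwa [hc', Fintype.card_fin] at this
  obtain ⟨t, ht, htc⟩ := Finset.exists_subset_card_eq (n := 3) (by rw [hc']; norm_num)
  obtain ⟨i, j, k, hij, hik, hjk, rfl⟩ := Finset.card_eq_three.1 htc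
  have hi := (Finset.mem_filter.1 (ht (show i ∈ _ by simp))).2
  have hj := (Finset.mem_filter.1 (ht (show j ∈ _ by simp))).2
  have hk := (Finset.mem_filter.1 (ht (show k ∈ _ by simp))).2
  obtain ⟨η, hη, hr, hη0⟩ := h.lower hij hik hjk (by omega)
  exact ⟨η, hη.ternary (by omega), hr⟩

/-- For `a = 3`, `∑ (bᵢ - 1)(bᵢ - 2) = 2n - 16 ≤ 0`, so `n = 8` and each `bᵢ` is `1` or `2`;
since `∑ bᵢ = 9`, exactly one of them is `2`. -/
lemma IsRoot.reach_of_three {n : ℕ} (hn : n ≤ 8) {ξ : Fin (n + 1) → ℤ} (h : IsRoot n ξ)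
    (h0 : ξ 0 = 3) : 6 ≤ n ∧ ∃ η, IsTernary n η ∧ Reach n ξ η := by
  have hq := h.sum_quad (-1) (-2)
  have hnn : ∀ i ∈ (Finset.univ : Finset (Fin n)),
      0 ≤ (-ξ i.succ + -1) * (-ξ i.succ + -2) := by
    intro i _
    rcases le_or_gt (-ξ i.succ) 1 with hb | hb
    · nlinarith
    · exact mul_nonneg (by omega) (by omega)
  have hsn := Finset.sum_nonneg hnn
  rw [h0] at hq
  have hn8 : n = 8 := by omega
  subst hn8
  have hq0 := (Finset.sum_eq_zero_iff_of_nonneg hnn).1 (by rw [hq]; norm_num)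
  have hall : ∀ i : Fin 8, ξ i.succ = -1 ∨ ξ i.succ = -2 := by
    intro i
    rcases mul_eq_zero.1 (hq0 i (Finset.mem_univ i)) with hb | hb
    · left; omega
    · right; omega
  have hs := h.sum
  have hx : ∀ i : Fin 8, ξ i.succ = -1 - (if ξ i.succ = -2 then 1 else 0) := by
    intro i
    rcases hall i with hb | hb <;> simp [hb]
  rw [Finset.sum_congr rfl fun i _ => hx i, Finset.sum_sub_distrib, Finset.sum_boole, h0] at hs
  simp at hs
  have hc1 : (Finset.univ.filter fun i : Fin 8 => ξ i.succ = -2).card = 1 := by omega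
  obtain ⟨i, hi⟩ := Finset.card_eq_one.1 hc1
  have hmem : ∀ l : Fin 8, ξ l.succ = -2 ↔ l = i := by
    intro l
    simpa using Finset.ext_iff.1 hi l
  have hcc : (Finset.univ.erase i).card = 7 := by simp
  obtain ⟨t, ht, htc⟩ := Finset.exists_subset_card_eq (n := 2) (by rw [hcc]; norm_num)
  obtain ⟨j, k, hjk, rfl⟩ := Finset.card_eq_two.1 htc
  have hj : j ≠ i := (Finset.mem_erase.1 (ht (show j ∈ _ by simp))).1
  have hk : k ≠ i := (Finset.mem_erase.1 (ht (show k ∈ _ by simp))).1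
  have hi2 := (hmem i).2 rfl
  have hj1 := (hall j).resolve_right fun e => hj ((hmem j).1 e)
  have hk1 := (hall k).resolve_right fun e => hk ((hmem k).1 e)
  obtain ⟨η, hη, hr, hη0⟩ := h.lower hj.symm hk.symm hjk (by omega)
  obtain ⟨h6, ζ, hζ, hr'⟩ := hη.reach_of_two (by omega)
  exact ⟨h6, ζ, hζ, hr.trans hr'⟩

lemma IsRoot.classify {n : ℕ} (hn1 : 1 ≤ n) (hn : n ≤ 8) {ξ : Fin (n + 1) → ℤ}
    (h : IsRoot n ξ) (h0 : 0 ≤ ξ 0) :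
    IsBinary n ξ ∨ IsTernary n ξ ∨ (6 ≤ n ∧ ∃ η, IsTernary n η ∧ Reach n ξ η) := by
  have h3 := h.head_le hn1 hn
  obtain h0 | h0 | h0 | h0 : ξ 0 = 0 ∨ ξ 0 = 1 ∨ ξ 0 = 2 ∨ ξ 0 = 3 := by omega
  · exact Or.inl (h.binary h0)
  · exact Or.inr (Or.inl (h.ternary h0))
  · exact Or.inr (Or.inr (h.reach_of_two h0))
  · exact Or.inr (Or.inr (h.reach_of_three hn h0))

lemma IsTernary.three_le {n : ℕ} {ξ : Fin (n + 1) → ℤ} (h : IsTernary n ξ) : 3 ≤ n := by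
  obtain ⟨i, j, k, hi, hj, hk, hij, hik, hjk, -⟩ := h
  omega

lemma IsTernary.eq_of_three {ξ : Fin (3 + 1) → ℤ} (h : IsTernary 3 ξ) :
    ξ = H 3 - E 3 0 - E 3 1 - E 3 2 := by
  obtain ⟨i, j, k, hi, hj, hk, hij, hik, hjk, rfl⟩ := h
  interval_cases i <;> interval_cases j <;> interval_cases k <;> first | omega | module

lemma IsRoot.reach_gen {n : ℕ} (hn1 : 1 ≤ n) (hn : n ≤ 8) {ξ : Fin (n + 1) → ℤ}
    (h : IsRoot n ξ) (h0 : 0 ≤ ξ 0) : ∃ η, IsGen n η ∧ Reach n ξ η := by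
  rcases h.classify hn1 hn h0 with hb | ht | ⟨-, η, ht, hr⟩
  · exact ⟨ξ, Or.inl hb, Relation.ReflTransGen.refl⟩
  · exact ⟨ξ, Or.inr ht, Relation.ReflTransGen.refl⟩
  · exact ⟨η, Or.inr ht, hr⟩

lemma IsRoot.reach_std {n : ℕ} (hn1 : 1 ≤ n) (hn : n ≤ 8) {ξ : Fin (n + 1) → ℤ}
    (h : IsRoot n ξ) (h0 : 0 ≤ ξ 0) (hex : n = 3 → ξ ≠ H n - E n 0 - E n 1 - E n 2) :
    Reach n ξ (E n 0 - E n 1) := by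
  rcases h.classify hn1 hn h0 with hb | ht | ⟨h6, η, ht, hr⟩
  · exact reach_of_isBinary hb
  · have h3 := ht.three_le
    rcases h3.eq_or_lt with rfl | h4
    · exact absurd ht.eq_of_three (hex rfl)
    · exact reach_of_isTernary h4 ht
  · exact hr.trans (reach_of_isTernary (by omega) ht)

/-- `n ≥ 2` whenever `L_n` has a root, so `E n 0 - E n 1` is binary. -/
lemma IsRoot.two_le {n : ℕ} (hn1 : 1 ≤ n) {ξ : Fin (n + 1) → ℤ} (h : IsRoot n ξ) : 2 ≤ n := by
  by_contra hlt
  obtain rfl : n = 1 := by omega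
  have hs := h.sum
  have hq := h.sum_sq
  simp only [Finset.univ_unique, Finset.sum_singleton] at hs hq
  -- Here `b = 3a`, so the square is `-8a²`, which is never `-2`.
  rw [hs] at hq
  have : 4 * ξ 0 ^ 2 = 1 := by linarith
  omega

theorem stmt0 (n : ℕ) (hn1 : 1 ≤ n) (hn8 : n ≤ 8) (ξ : Fin (n + 1) → ℤ)
    (hsq : form n ξ ξ = -2) (hK : form n (K0 n) ξ = 0) :
    (∃ l : List ((Fin (n + 1) → ℤ) → (Fin (n + 1) → ℤ)),
      (∀ f ∈ l, ∃ γ, (IsBinary n γ ∨ IsTernary n γ) ∧ f = refl n γ) ∧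
      (IsBinary n (l.foldr (· ∘ ·) id ξ) ∨ IsTernary n (l.foldr (· ∘ ·) id ξ))) ∧
    ((n ≠ 3 ∨ (n = 3 ∧ ξ ≠ H n - E n 0 - E n 1 - E n 2 ∧
        ξ ≠ -(H n - E n 0 - E n 1 - E n 2))) →
      ∃ l : List ((Fin (n + 1) → ℤ) → (Fin (n + 1) → ℤ)),
        (∀ f ∈ l, ∃ γ, (IsBinary n γ ∨ IsTernary n γ) ∧ f = refl n γ) ∧
        l.foldr (· ∘ ·) id ξ = E n 0 - E n 1) := by
  have hξ : IsRoot n ξ := ⟨hsq, hK⟩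
  refine ⟨?_, fun hex => ?_⟩
  · obtain ⟨η, hη, hr⟩ : ∃ η, IsGen n η ∧ Reach n ξ η := by
      rcases le_total 0 (ξ 0) with h0 | h0
      · exact hξ.reach_gen hn1 hn8 h0
      · obtain ⟨η, hη, hr⟩ := hξ.neg.reach_gen hn1 hn8 (by simpa using h0)
        have hr' := hr.neg.trans (Reach.gen_neg hη).neg
        exact ⟨η, hη, by simpa using hr'⟩
    obtain ⟨l, hl, he⟩ := hr.exists_list
    exact ⟨l, hl, by rw [he]; exact hη⟩
  · apply Reach.exists_list
    rcases le_total 0 (ξ 0) with h0 | h0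
    · exact hξ.reach_std hn1 hn8 h0 fun h3 => by tauto
    · have hr := hξ.neg.reach_std hn1 hn8 (by simpa using h0) fun h3 e => by
        have : ξ = -(H n - E n 0 - E n 1 - E n 2) := by rw [← e, neg_neg]
        tauto
      have hb : IsGen n (E n 0 - E n 1) := by
        have h2 := hξ.two_le hn1
        exact Or.inl ⟨0, 1, by omega, by omega, by omega, rfl⟩
      simpa using hr.neg.trans (Reach.gen_neg hb).neg

end LiWuRational
end

section
/- Let φ : L → L be a ℤ-linear bijection preserving the intersection form such that φ(K_0) = K_0 and φ(F) = F or φ(F) = −F, and let α : L → ℝ be a ℤ-linear functional satisfying α(F) > 0, α(E_i) > 0 and α(F − E_i) > 0 for all 1 ≤ i ≤ n, and α ∘ φ = α. Then φ is equal to a finite composition of reflections R(γ) with γ ∈ {E_i − E_j : i ≠ j} ∪ {F − E_i − E_j : i ≠ j} and α(γ) = 0. -/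
/-!
Since `α (F) > 0` and `α ∘ φ = α`, the case `φ F = -F` is impossible, so `φ F = F`. Each `φ E_i` is
then orthogonal to `F`, has square `-1` and pairs to `-1` with `K_0`, which forces `φ E_i = E_k` or
`φ E_i = F - E_k` for some `k` (`classify`).

If `k ≠ i`, then `γ = φ E_i - E_i` is one of the allowed roots `E_k - E_i`, `F - E_k - E_i`;
`α γ = 0` because `α ∘ φ = α`, the reflection `R(γ)` sends `φ E_i` back to `E_i`, and it fixes
every `E_j` already fixed by `φ`, since `γ · E_j = φ E_i · φ E_j - E_i · E_j = 0`. If `k = i` for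
all `i` and two indices `i ≠ j` have `φ E_i = F - E_i`, `φ E_j = F - E_j`, then
`2 α(E_i) = α(F) = 2 α(E_j)`, and `R(F - E_i - E_j) R(E_i - E_j)` undoes both. So the number of
indices not fixed by `φ` drops (`exists_list`). Finally, `φ K_0 = K_0` excludes exactly one
remaining index, as `F` would be divisible by `2`, and when all `E_i` are fixed it gives `φ T = T`.
-/

namespace LiWuRuled

/-- The intersection pairing on the lattice `L` of `(Σ_h × S²) # n(conj CP²)`:
coordinate `0` is the `T`-coefficient, coordinate `1` the `F`-coefficient, and
coordinate `i+2` the coefficient of `E_{i+1}`.  `T·F = 1`, `T² = F² = 0`,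
`T·E_i = F·E_i = 0`, `E_i·E_j = -δ_{ij}`. -/
def form (n : ℕ) (x y : Fin (n + 2) → ℤ) : ℤ :=
  x 0 * y 1 + x 1 * y 0 - ∑ i : Fin n, x i.succ.succ * y i.succ.succ

/-- The section class `T`. -/
def T (n : ℕ) : Fin (n + 2) → ℤ := fun j => if (j : ℕ) = 0 then 1 else 0

/-- The fiber class `F`. -/
def F (n : ℕ) : Fin (n + 2) → ℤ := fun j => if (j : ℕ) = 1 then 1 else 0

/-- The exceptional class `E_{i+1}` (0-based index `i < n`). -/
def E (n : ℕ) (i : ℕ) : Fin (n + 2) → ℤ := fun j => if (j : ℕ) = i + 2 then 1 else 0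

/-- The standard canonical class `K_0 = -2T + (2h-2)F + E_1 + ⋯ + E_n`. -/
def K0 (n : ℕ) (h : ℤ) : Fin (n + 2) → ℤ :=
  fun j => if (j : ℕ) = 0 then -2 else if (j : ℕ) = 1 then 2 * h - 2 else 1

/-- The reflection along `γ`: `R(γ)(β) = β - (2(γ·β)/(γ·γ)) γ`. -/
def refl (n : ℕ) (γ β : Fin (n + 2) → ℤ) : Fin (n + 2) → ℤ :=
  β - (2 * form n γ β / form n γ γ) • γ

/-! ### The intersection form and the exceptional classes -/

section Form

variable {n : ℕ}

lemma form_comm (x y : Fin (n + 2) → ℤ) : form n x y = form n y x := by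
  simp only [form, mul_comm (x _)]
  ring

lemma form_add_right (x y z : Fin (n + 2) → ℤ) :
    form n x (y + z) = form n x y + form n x z := by
  simp only [form, Pi.add_apply, mul_add, Finset.sum_add_distrib]
  ring

lemma form_smul_right (c : ℤ) (x y : Fin (n + 2) → ℤ) :
    form n x (c • y) = c * form n x y := by
  simp only [form, Pi.smul_apply, smul_eq_mul, mul_sub, Finset.mul_sum, mul_left_comm _ c]
  ring

lemma form_sub_right (x y z : Fin (n + 2) → ℤ) :
    form n x (y - z) = form n x y - form n x z := by
  have h := form_add_right x (y - z) z
  rw [sub_add_cancel] at h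
  lia

lemma form_add_left (x y z : Fin (n + 2) → ℤ) :
    form n (x + y) z = form n x z + form n y z := by
  rw [form_comm, form_add_right, form_comm z, form_comm z]

lemma form_smul_left (c : ℤ) (x y : Fin (n + 2) → ℤ) :
    form n (c • x) y = c * form n x y := by
  rw [form_comm, form_smul_right, form_comm y]

lemma form_sub_left (x y z : Fin (n + 2) → ℤ) :
    form n (x - y) z = form n x z - form n y z := by
  rw [form_comm, form_sub_right, form_comm z, form_comm z]

lemma E_zero (i : ℕ) : E n i 0 = 0 := by simp [E]

lemma E_one (i : ℕ) : E n i 1 = 0 := by simp [E]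

lemma E_succ (i : ℕ) (k : Fin n) : E n i k.succ.succ = if (k : ℕ) = i then 1 else 0 := by
  simp [E]

lemma F_zero : F n 0 = 0 := by simp [F]

lemma F_one : F n 1 = 1 := by simp [F]

lemma F_succ (k : Fin n) : F n k.succ.succ = 0 := by simp [F]

lemma K0_zero (h : ℤ) : K0 n h 0 = -2 := by simp [K0]

lemma K0_one (h : ℤ) : K0 n h 1 = 2 * h - 2 := by simp [K0]

lemma K0_succ (h : ℤ) (k : Fin n) : K0 n h k.succ.succ = 1 := by simp [K0]

lemma form_E (x : Fin (n + 2) → ℤ) (i : Fin n) : form n x (E n i) = - x i.succ.succ := by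
  simp [form, E_zero, E_one, E_succ, Fin.val_inj]

lemma form_F (x : Fin (n + 2) → ℤ) : form n x (F n) = x 0 := by
  simp [form, F_zero, F_one, F_succ]

lemma form_K0 (h : ℤ) (x : Fin (n + 2) → ℤ) :
    form n x (K0 n h) = x 0 * (2 * h - 2) - 2 * x 1 - ∑ i : Fin n, x i.succ.succ := by
  simp only [form, K0_zero, K0_one, K0_succ, mul_one]
  ring

lemma form_EE (i j : Fin n) : form n (E n i) (E n j) = if i = j then -1 else 0 := by
  rw [form_E, E_succ]
  by_cases hij : i = j
  · simp [hij]
  · simp [hij, Fin.val_inj, Ne.symm hij]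

lemma form_FE (i : Fin n) : form n (F n) (E n i) = 0 := by
  rw [form_E, F_succ, neg_zero]

lemma form_FF : form n (F n) (F n) = 0 := by
  rw [form_F, F_zero]

lemma form_EF (i : ℕ) : form n (E n i) (F n) = 0 := by
  rw [form_F, E_zero]

lemma form_FK (h : ℤ) : form n (F n) (K0 n h) = -2 := by
  simp [form_K0, F_zero, F_one, F_succ]

lemma form_EK (h : ℤ) (i : Fin n) : form n (E n i) (K0 n h) = -1 := by
  simp [form_K0, E_zero, E_one, E_succ, Fin.val_inj]

lemma ext_coords {x y : Fin (n + 2) → ℤ} (h0 : x 0 = y 0) (h1 : x 1 = y 1)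
    (h2 : ∀ k : Fin n, x k.succ.succ = y k.succ.succ) : x = y := by
  funext j
  refine Fin.cases h0 (fun j => ?_) j
  exact Fin.cases h1 h2 j

/-- The exceptional classes orthogonal to the fiber are the `E_k` and the `F - E_k`. -/
lemma classify (h : ℤ) (x : Fin (n + 2) → ℤ) (hF : form n x (F n) = 0)
    (hx : form n x x = -1) (hK : form n x (K0 n h) = -1) :
    ∃ k : Fin n, x = E n k ∨ x = F n - E n k := by
  rw [form_F] at hF
  have hsum : ∑ i : Fin n, x i.succ.succ * x i.succ.succ = 1 := by
    simp only [form, hF] at hx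
    lia
  obtain ⟨k, -, hk⟩ : ∃ k ∈ Finset.univ, x (Fin.succ (Fin.succ k)) * x k.succ.succ ≠ 0 :=
    Finset.exists_ne_zero_of_sum_ne_zero (by rw [hsum]; exact one_ne_zero)
  have hsplit := Finset.add_sum_erase Finset.univ
    (fun i : Fin n => x i.succ.succ * x i.succ.succ) (Finset.mem_univ k)
  have hpos : 0 < x k.succ.succ * x k.succ.succ :=
    lt_of_le_of_ne (mul_self_nonneg _) (Ne.symm hk)
  have hnonneg : ∀ i ∈ Finset.univ.erase k, 0 ≤ x (Fin.succ (Fin.succ i)) * x i.succ.succ :=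
    fun i _ => mul_self_nonneg _
  have hrest := Finset.sum_nonneg hnonneg
  rw [hsum] at hsplit
  have hzero : ∀ i : Fin n, i ≠ k → x i.succ.succ = 0 := fun i hi =>
    mul_self_eq_zero.mp ((Finset.sum_eq_zero_iff_of_nonneg hnonneg).mp (by lia) i
      (Finset.mem_erase.mpr ⟨hi, Finset.mem_univ i⟩))
  have hlin : ∑ i : Fin n, x i.succ.succ = x k.succ.succ :=
    Finset.sum_eq_single k (fun i _ hi => hzero i hi) (fun hk => absurd (Finset.mem_univ k) hk)
  rw [form_K0, hF, hlin] at hK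
  refine ⟨k, ?_⟩
  rcases mul_self_eq_one_iff.mp (show x k.succ.succ * x k.succ.succ = 1 by linarith) with h1 | h1
  · left
    refine ext_coords (by rw [hF, E_zero]) (by rw [E_one]; lia) fun i => ?_
    by_cases hi : i = k
    · rw [hi, h1, E_succ, if_pos rfl]
    · rw [hzero i hi, E_succ, if_neg (fun e => hi (Fin.ext e))]
  · right
    refine ext_coords (by simp [hF, F_zero, E_zero]) (by simp [E_one, F_one]; lia) fun i => ?_
    rw [Pi.sub_apply, F_succ]
    by_cases hi : i = k
    · rw [hi, h1, E_succ, if_pos rfl, zero_sub]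
    · rw [hzero i hi, E_succ, if_neg (fun e => hi (Fin.ext e)), sub_zero]

lemma decomp (x : Fin (n + 2) → ℤ) :
    x = x 0 • T n + x 1 • F n + ∑ i : Fin n, x i.succ.succ • E n i := by
  refine ext_coords ?_ ?_ fun k => ?_
  · simp [T, F_zero, E_zero]
  · simp [T, F_one, E_one]
  · simp [T, F_succ, E_succ, Fin.val_inj]

lemma K0_decomp (h : ℤ) :
    K0 n h = (-2 : ℤ) • T n + (2 * h - 2) • F n + ∑ i : Fin n, E n i := by
  have := decomp (K0 n h)
  simpa only [K0_zero, K0_one, K0_succ, one_smul] using this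

end Form

/-! ### Reflections and the descent on moved classes -/

section Reflections

variable {n : ℕ}

/-- The map `β ↦ β + (γ · β) γ`, which is the reflection along `γ` when `γ · γ = -2`. -/
def reflLin (n : ℕ) (γ : Fin (n + 2) → ℤ) : (Fin (n + 2) → ℤ) →ₗ[ℤ] (Fin (n + 2) → ℤ) where
  toFun β := β + form n γ β • γ
  map_add' x y := by rw [form_add_right, add_smul]; abel
  map_smul' c x := by simp only [form_smul_right, mul_smul, smul_add, RingHom.id_apply]

lemma reflLin_apply (γ β : Fin (n + 2) → ℤ) : reflLin n γ β = β + form n γ β • γ := rfl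

lemma refl_eq {γ : Fin (n + 2) → ℤ} (hγ : form n γ γ = -2) : refl n γ = reflLin n γ := by
  funext β
  have hdiv : 2 * form n γ β / form n γ γ = -form n γ β := by
    rw [hγ]
    lia
  rw [refl, hdiv, reflLin_apply, neg_smul, sub_neg_eq_add]

lemma reflLin_fix {γ β : Fin (n + 2) → ℤ} (hβ : form n γ β = 0) : reflLin n γ β = β := by
  rw [reflLin_apply, hβ, zero_smul, add_zero]

lemma reflLin_invol {γ : Fin (n + 2) → ℤ} (hγ : form n γ γ = -2) (β : Fin (n + 2) → ℤ) :
    reflLin n γ (reflLin n γ β) = β := by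
  rw [reflLin_apply, reflLin_apply, form_add_right, form_smul_right, hγ, add_assoc, ← add_smul,
    show form n γ β + (form n γ β + form n γ β * -2) = 0 by ring, zero_smul, add_zero]

lemma form_reflLin {γ : Fin (n + 2) → ℤ} (hγ : form n γ γ = -2) (x y : Fin (n + 2) → ℤ) :
    form n (reflLin n γ x) (reflLin n γ y) = form n x y := by
  simp only [reflLin_apply, form_add_right, form_add_left, form_smul_right, form_smul_left, hγ,
    form_comm x γ]
  ring

/-- The classes `γ` with `α γ = 0` along which the theorem allows reflections. -/
def IsGen (n : ℕ) (α : (Fin (n + 2) → ℤ) →ₗ[ℤ] ℝ) (γ : Fin (n + 2) → ℤ) : Prop :=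
  ((∃ i j : ℕ, i < n ∧ j < n ∧ i ≠ j ∧ γ = E n i - E n j) ∨
    (∃ i j : ℕ, i < n ∧ j < n ∧ i ≠ j ∧ γ = F n - E n i - E n j)) ∧ α γ = 0

variable {α : (Fin (n + 2) → ℤ) →ₗ[ℤ] ℝ}

lemma isGen_sub {i j : Fin n} (hij : i ≠ j) (hα : α (E n i - E n j) = 0) :
    IsGen n α (E n i - E n j) :=
  ⟨Or.inl ⟨i, j, i.2, j.2, fun e => hij (Fin.ext e), rfl⟩, hα⟩

lemma isGen_F_sub {i j : Fin n} (hij : i ≠ j) (hα : α (F n - E n i - E n j) = 0) :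
    IsGen n α (F n - E n i - E n j) :=
  ⟨Or.inr ⟨i, j, i.2, j.2, fun e => hij (Fin.ext e), rfl⟩, hα⟩

lemma IsGen.numbers {γ : Fin (n + 2) → ℤ} (hγ : IsGen n α γ) (h : ℤ) :
    form n γ γ = -2 ∧ form n γ (F n) = 0 ∧ form n γ (K0 n h) = 0 := by
  obtain ⟨⟨i, j, hi, hj, hij, rfl⟩ | ⟨i, j, hi, hj, hij, rfl⟩, -⟩ := hγ <;>
  · lift i to Fin n using hi
    lift j to Fin n using hj
    have hij' : i ≠ j := fun e => hij (congrArg _ e)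
    simp [form_sub_left, form_sub_right, form_EE, form_FE, form_EF, form_FF, form_FK, form_EK,
      hij', hij'.symm]

/-- The properties of `φ` used in the induction: it is an isometry fixing `K_0` and `F`, and it
preserves `α`. -/
structure Good (n : ℕ) (h : ℤ) (α : (Fin (n + 2) → ℤ) →ₗ[ℤ] ℝ)
    (ψ : (Fin (n + 2) → ℤ) →ₗ[ℤ] (Fin (n + 2) → ℤ)) : Prop where
  form_eq : ∀ x y, form n (ψ x) (ψ y) = form n x y
  map_K : ψ (K0 n h) = K0 n h
  map_F : ψ (F n) = F n
  map_α : ∀ x, α (ψ x) = α x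

variable {h : ℤ} {ψ : (Fin (n + 2) → ℤ) →ₗ[ℤ] (Fin (n + 2) → ℤ)}

lemma Good.comp (hψ : Good n h α ψ) {γ : Fin (n + 2) → ℤ} (hγ : IsGen n α γ) :
    Good n h α (reflLin n γ ∘ₗ ψ) := by
  obtain ⟨h2, hF, hK⟩ := hγ.numbers h
  refine ⟨fun x y => ?_, ?_, ?_, fun x => ?_⟩
  · rw [LinearMap.comp_apply, LinearMap.comp_apply, form_reflLin h2, hψ.form_eq]
  · rw [LinearMap.comp_apply, hψ.map_K, reflLin_fix hK]
  · rw [LinearMap.comp_apply, hψ.map_F, reflLin_fix hF]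
  · rw [LinearMap.comp_apply, reflLin_apply, map_add, map_zsmul, hγ.2, smul_zero, add_zero,
      hψ.map_α]

lemma Good.map_E (hψ : Good n h α ψ) (i : Fin n) :
    ∃ k : Fin n, ψ (E n i) = E n k ∨ ψ (E n i) = F n - E n k := by
  apply classify h
  · conv_lhs => rw [← hψ.map_F]
    rw [hψ.form_eq, form_EF]
  · rw [hψ.form_eq, form_EE, if_pos rfl]
  · conv_lhs => rw [← hψ.map_K]
    rw [hψ.form_eq, form_EK]

/-- `ψ` is a composition of the allowed reflections. -/
def Decomposes (n : ℕ) (α : (Fin (n + 2) → ℤ) →ₗ[ℤ] ℝ)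
    (ψ : (Fin (n + 2) → ℤ) →ₗ[ℤ] (Fin (n + 2) → ℤ)) : Prop :=
  ∃ l : List ((Fin (n + 2) → ℤ) → (Fin (n + 2) → ℤ)),
    (∀ f ∈ l, ∃ γ, IsGen n α γ ∧ f = refl n γ) ∧ ⇑ψ = l.foldr (· ∘ ·) id

lemma Decomposes.of_comp {γ : Fin (n + 2) → ℤ} (hγ : IsGen n α γ)
    (hd : Decomposes n α (reflLin n γ ∘ₗ ψ)) : Decomposes n α ψ := by
  obtain ⟨l, hl, e⟩ := hd
  have h2 := (hγ.numbers 0).1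
  refine ⟨refl n γ :: l, ?_, ?_⟩
  · intro f hf
    rcases List.mem_cons.mp hf with rfl | hf
    · exact ⟨γ, hγ, rfl⟩
    · exact hl f hf
  · rw [List.foldr_cons, ← e, refl_eq h2]
    funext x
    exact (reflLin_invol h2 (ψ x)).symm

/-- The indices of the exceptional classes moved by `ψ`. -/
def moved (n : ℕ) (ψ : (Fin (n + 2) → ℤ) →ₗ[ℤ] (Fin (n + 2) → ℤ)) : Finset (Fin n) :=
  {i | ψ (E n i) ≠ E n i}

lemma mem_moved {i : Fin n} : i ∈ moved n ψ ↔ ψ (E n i) ≠ E n i := by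
  simp [moved]

lemma card_moved_lt {ψ' : (Fin (n + 2) → ℤ) →ₗ[ℤ] (Fin (n + 2) → ℤ)}
    (hsub : ∀ j : Fin n, ψ (E n j) = E n j → ψ' (E n j) = E n j) {i : Fin n}
    (hi : ψ (E n i) ≠ E n i) (hi' : ψ' (E n i) = E n i) :
    (moved n ψ').card < (moved n ψ).card := by
  refine Finset.card_lt_card ((Finset.ssubset_iff_of_subset fun j hj => ?_).mpr
    ⟨i, mem_moved.mpr hi, fun hm => mem_moved.mp hm hi'⟩)
  exact mem_moved.mpr fun e => mem_moved.mp hj (hsub j e)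

/-- If `ψ E_i` is orthogonal to `E_i`, then `ψ E_i - E_i` is an allowed root, and reflecting along
it restores `E_i` without moving any further `E_j`. -/
lemma Good.step_one (hψ : Good n h α ψ) {i k : Fin n} (hik : i ≠ k)
    (hk : ψ (E n i) = E n k ∨ ψ (E n i) = F n - E n k) :
    ∃ γ, IsGen n α γ ∧ (moved n (reflLin n γ ∘ₗ ψ)).card < (moved n ψ).card := by
  have hα : α (ψ (E n i) - E n i) = 0 := by rw [map_sub, hψ.map_α, sub_self]
  have horth : form n (E n i) (ψ (E n i)) = 0 := by
    rcases hk with e | e <;>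
      simp [e, form_sub_right, form_EE, form_EF, hik]
  have hii : form n (E n i) (E n i) = -1 := by rw [form_EE, if_pos rfl]
  have hne : ψ (E n i) ≠ E n i := by
    intro e
    rw [e, hii] at horth
    lia
  refine ⟨ψ (E n i) - E n i, ?_, card_moved_lt (i := i) (fun j hj => ?_) hne ?_⟩
  · rcases hk with e | e
    · rw [e] at hα ⊢
      exact isGen_sub hik.symm hα
    · rw [e] at hα ⊢
      exact isGen_F_sub hik.symm hα
  · rw [LinearMap.comp_apply, hj]
    apply reflLin_fix
    rw [form_sub_left]
    have e := hψ.form_eq (E n i) (E n j)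
    rw [hj] at e
    rw [e, sub_self]
  · rw [LinearMap.comp_apply, reflLin_apply, form_sub_left, hψ.form_eq, hii, horth]
    simp

/-- Two classes `E_i`, `E_j` with `ψ E_i = F - E_i` and `ψ E_j = F - E_j` are restored by the
product of the reflections along `E_i - E_j` and `F - E_i - E_j`, which fixes the other `E_k`. -/
lemma Good.step_two (hψ : Good n h α ψ) {i j : Fin n} (hij : i ≠ j)
    (hi : ψ (E n i) = F n - E n i) (hj : ψ (E n j) = F n - E n j)
    (hne : ψ (E n i) ≠ E n i) :
    ∃ γ₁ γ₂, IsGen n α γ₁ ∧ IsGen n α γ₂ ∧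
      (moved n (reflLin n γ₂ ∘ₗ reflLin n γ₁ ∘ₗ ψ)).card < (moved n ψ).card := by
  have hai := hψ.map_α (E n i)
  have haj := hψ.map_α (E n j)
  rw [hi, map_sub] at hai
  rw [hj, map_sub] at haj
  have hii : form n (E n i) (E n i) = -1 := by rw [form_EE, if_pos rfl]
  have hjj : form n (E n j) (E n j) = -1 := by rw [form_EE, if_pos rfl]
  have hijf : form n (E n i) (E n j) = 0 := by rw [form_EE, if_neg hij]
  have hjif : form n (E n j) (E n i) = 0 := by rw [form_EE, if_neg hij.symm]
  refine ⟨E n i - E n j, F n - E n i - E n j, isGen_sub hij (by rw [map_sub]; linarith),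
    isGen_F_sub hij (by rw [map_sub, map_sub]; linarith),
    card_moved_lt (i := i) (fun k hk => ?_) hne ?_⟩
  · have hki : i ≠ k := by
      rintro rfl
      exact hne hk
    have hkj : j ≠ k := by
      rintro rfl
      -- `E_j = ψ E_j = F - E_j` contradicts `E_j · E_j = -1`.
      have e : form n (E n j) (E n j) = form n (F n - E n j) (E n j) := by
        rw [← hj, hk]
      rw [form_sub_left, form_FE, hjj] at e
      lia
    have h1 : form n (E n i - E n j) (E n k) = 0 := by
      simp [form_sub_left, form_EE, hki, hkj]
    have h2 : form n (F n - E n i - E n j) (E n k) = 0 := by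
      simp [form_sub_left, form_EE, form_FE, hki, hkj]
    rw [LinearMap.comp_apply, LinearMap.comp_apply, hk, reflLin_fix h1, reflLin_fix h2]
  · have h1 : reflLin n (E n i - E n j) (F n - E n i) = F n - E n j := by
      rw [reflLin_apply]
      simp only [form_sub_left, form_sub_right, form_EF, hii, hjif]
      simp
    have h2 : reflLin n (F n - E n i - E n j) (F n - E n j) = E n i := by
      rw [reflLin_apply]
      simp only [form_sub_left, form_sub_right, form_EF, form_FE, form_FF, hijf, hjj]
      simp
    rw [LinearMap.comp_apply, LinearMap.comp_apply, hi, h1, h2]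

/-- When at most one `E_i` is moved, and only to `F - E_i`, then `ψ` is the identity: a moved class
would make `F` divisible by `2`. -/
lemma Good.eq_id (hψ : Good n h α ψ) (hcase : ∀ i : Fin n, ψ (E n i) = E n i ∨
      ψ (E n i) = F n - E n i)
    (huniq : ∀ i j : Fin n, i ≠ j → ψ (E n i) ≠ E n i → ψ (E n j) = E n j) :
    ψ = LinearMap.id := by
  have hK := hψ.map_K
  rw [K0_decomp, map_add, map_add, map_smul, map_smul, map_sum, hψ.map_F] at hK
  have hfix : ∀ i : Fin n, ψ (E n i) = E n i := by
    intro i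
    by_contra hi
    have hFi := (hcase i).resolve_left hi
    have hsum : ∑ j : Fin n, ψ (E n j) = ∑ j : Fin n, E n j + (F n - E n i - E n i) := by
      rw [← Finset.add_sum_erase _ _ (Finset.mem_univ i),
        ← Finset.add_sum_erase _ (fun j : Fin n => E n j) (Finset.mem_univ i), hFi,
        Finset.sum_congr rfl fun j hj => huniq i j (Finset.ne_of_mem_erase hj).symm hi]
      abel
    rw [hsum] at hK
    have h1 := congrFun hK 1
    simp [F_one, E_one, T] at h1
    lia
  have hT : ψ (T n) = T n := by
    simp only [hfix] at hK
    exact smul_right_injective _ (by decide : (-2 : ℤ) ≠ 0)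
      (add_right_cancel (add_right_cancel hK))
  refine LinearMap.ext fun x => ?_
  conv_lhs => rw [decomp x]
  rw [map_add, map_add, map_smul, map_smul, map_sum, hT, hψ.map_F]
  simp only [map_smul, hfix]
  exact (decomp x).symm

/-- Descent on the number `N` of exceptional classes moved by `ψ`. -/
lemma exists_list (N : ℕ) : ∀ ψ : (Fin (n + 2) → ℤ) →ₗ[ℤ] (Fin (n + 2) → ℤ),
    Good n h α ψ → (moved n ψ).card = N → Decomposes n α ψ := by
  induction N using Nat.strong_induction_on with
  | _ N ih =>
    intro ψ hψ hN
    by_cases h1 : ∃ i k : Fin n, i ≠ k ∧ (ψ (E n i) = E n k ∨ ψ (E n i) = F n - E n k)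
    · obtain ⟨i, k, hik, hk⟩ := h1
      obtain ⟨γ, hγ, hlt⟩ := hψ.step_one hik hk
      exact Decomposes.of_comp hγ (ih _ (hN ▸ hlt) _ (hψ.comp hγ) rfl)
    have hcase : ∀ i : Fin n, ψ (E n i) = E n i ∨ ψ (E n i) = F n - E n i := by
      intro i
      obtain ⟨k, hk⟩ := hψ.map_E i
      by_cases hik : i = k
      · rw [hik] at hk ⊢
        exact hk
      · exact absurd ⟨i, k, hik, hk⟩ h1
    by_cases h2 : ∃ i j : Fin n, i ≠ j ∧ ψ (E n i) ≠ E n i ∧ ψ (E n j) ≠ E n j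
    · obtain ⟨i, j, hij, hi, hj⟩ := h2
      obtain ⟨γ₁, γ₂, hγ₁, hγ₂, hlt⟩ := hψ.step_two hij ((hcase i).resolve_left hi)
        ((hcase j).resolve_left hj) hi
      exact Decomposes.of_comp hγ₁ (Decomposes.of_comp hγ₂
        (ih _ (hN ▸ hlt) _ ((hψ.comp hγ₁).comp hγ₂) rfl))
    · push Not at h2
      have hid := hψ.eq_id hcase h2
      exact ⟨[], by simp, by rw [hid]; rfl⟩

end Reflections

theorem stmt2 (n : ℕ) (hn : 1 ≤ n) (h : ℤ)
    (φ : (Fin (n + 2) → ℤ) ≃ₗ[ℤ] (Fin (n + 2) → ℤ))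
    (hform : ∀ x y, form n (φ x) (φ y) = form n x y)
    (hK : φ (K0 n h) = K0 n h)
    (hF : φ (F n) = F n ∨ φ (F n) = -(F n))
    (α : (Fin (n + 2) → ℤ) →ₗ[ℤ] ℝ)
    (hαF : 0 < α (F n))
    (hαE : ∀ i : ℕ, i < n → 0 < α (E n i))
    (hαFE : ∀ i : ℕ, i < n → 0 < α (F n - E n i))
    (hαφ : ∀ x, α (φ x) = α x) :
    ∃ l : List ((Fin (n + 2) → ℤ) → (Fin (n + 2) → ℤ)),
      (∀ f ∈ l, ∃ γ,
        ((∃ i j : ℕ, i < n ∧ j < n ∧ i ≠ j ∧ γ = E n i - E n j) ∨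
         (∃ i j : ℕ, i < n ∧ j < n ∧ i ≠ j ∧ γ = F n - E n i - E n j)) ∧
        α γ = 0 ∧ f = refl n γ) ∧
      ⇑φ = l.foldr (· ∘ ·) id := by
  have hF' : φ (F n) = F n := by
    refine hF.resolve_right fun e => ?_
    have hneg := hαφ (F n)
    rw [e, map_neg] at hneg
    linarith
  obtain ⟨l, hl, e⟩ := exists_list (h := h) (α := α) _ (φ : (Fin (n + 2) → ℤ) →ₗ[ℤ] _)
    ⟨hform, hK, hF', hαφ⟩ rfl
  refine ⟨l, fun f hf => ?_, e⟩
  obtain ⟨γ, ⟨hγ, hα⟩, rfl⟩ := hl f hf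
  exact ⟨γ, hγ, hα, rfl⟩

end LiWuRuled
end

section
/- A class ξ ∈ L satisfies ξ·F = 0, ξ·ξ = −1 and K_0·ξ = −1 if and only if ξ = E_i for some 1 ≤ i ≤ n or ξ = F − E_i for some 1 ≤ i ≤ n. -/
/-!
Write `ξ = aT + bF + ∑ e_i E_i`. Then `ξ·F = a`, so `a = 0`, and `ξ·ξ = -1` becomes `∑ e_i² = 1`.
Over `ℤ` this forces exactly one `e_i = ±1` and the others to vanish
(`exists_eq_single_of_sum_sq_eq_one`). Finally `K_0·ξ = -2b - e_i = -1` gives `b = 0` when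
`e_i = 1` (so `ξ = E_i`) and `b = 1` when `e_i = -1` (so `ξ = F - E_i`).
-/

namespace LiWuRuled

/-- Integers whose squares sum to `1` form `±` a standard basis vector: a nonzero entry already
contributes at least `1`, which leaves nothing for the others. -/
theorem exists_eq_single_of_sum_sq_eq_one {n : ℕ} {e : Fin n → ℤ}
    (he : ∑ i, e i * e i = 1) :
    ∃ i, (e i = 1 ∨ e i = -1) ∧ ∀ j, j ≠ i → e j = 0 := by
  obtain ⟨i, hi⟩ : ∃ i, e i ≠ 0 := by
    by_contra! hall
    simp [hall] at he
  rw [← Finset.add_sum_erase _ _ (Finset.mem_univ i)] at he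
  have hnonneg : ∀ j ∈ Finset.univ.erase i, 0 ≤ e j * e j := fun j _ => mul_self_nonneg _
  have hrest := Finset.sum_nonneg hnonneg
  have hpos : 0 < e i * e i := mul_self_pos.mpr hi
  have hzero : ∑ j ∈ Finset.univ.erase i, e j * e j = 0 := by omega
  refine ⟨i, mul_self_eq_one_iff.mp (by omega), fun j hj => ?_⟩
  exact mul_self_eq_zero.mp
    ((Finset.sum_eq_zero_iff_of_nonneg hnonneg).mp hzero j (by simp [hj]))

theorem stmt3 (n : ℕ) (hn : 1 ≤ n) (h : ℤ) (ξ : Fin (n + 2) → ℤ) :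
    (form n ξ (F n) = 0 ∧ form n ξ ξ = -1 ∧ form n (K0 n h) ξ = -1) ↔
    (∃ i : ℕ, i < n ∧ (ξ = E n i ∨ ξ = F n - E n i)) := by
  constructor
  · rintro ⟨hF, hsq, hK⟩
    have h0 : ξ 0 = 0 := by simpa [form, F] using hF
    have hsum : ∑ i : Fin n, ξ i.succ.succ * ξ i.succ.succ = 1 := by
      simp only [form, h0] at hsq
      linarith
    obtain ⟨i, hi, hne⟩ := exists_eq_single_of_sum_sq_eq_one hsum
    have hS : ∑ j : Fin n, ξ j.succ.succ = ξ i.succ.succ :=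
      Finset.sum_eq_single i (fun j _ hj => hne j hj) (by simp)
    -- With vanishing `T`-coefficient, `K_0·ξ = -1` reads `2 (F-coefficient) + ∑ e_j = 1`.
    have h1 : 2 * ξ 1 + ξ i.succ.succ = 1 := by
      simp [form, K0, h0, hS] at hK
      linarith
    refine ⟨i, i.2, ?_⟩
    rcases hi with hi | hi
    · left
      have h1' : ξ 1 = 0 := by omega
      funext j
      refine Fin.cases (by simp [E, h0]) (fun j => Fin.cases (by simp [E, h1']) (fun j => ?_) j) j
      by_cases hj : j = i
      · subst hj; simp [E, hi]
      · simp [E, hne j hj, Fin.val_inj, hj]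
    · right
      have h1' : ξ 1 = 1 := by omega
      funext j
      refine Fin.cases (by simp [E, F, h0])
        (fun j => Fin.cases (by simp [E, F, h1']) (fun j => ?_) j) j
      by_cases hj : j = i
      · subst hj; simp [E, F, hi]
      · simp [E, F, hne j hj, Fin.val_inj, hj]
  · rintro ⟨i, hi, hξ⟩
    lift i to Fin n using hi
    rcases hξ with rfl | rfl <;> simp [form, E, F, K0, Fin.val_inj]

end LiWuRuled
end

section
/- Let n = 1, so L has basis T, F, E_1. If φ : L → L is a ℤ-linear bijection preserving the intersection form with φ(K_0) = K_0 and φ(F) = F or φ(F) = −F, then φ is the identity map. -/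
/-!
Since `K₀·F = -2 ≠ 0` and `φ` fixes `K₀`, the sign in `φ F = ±F` is `+`. Put `e = φ E₁`. From
`e·F = 0`, `e·e = -1` and `e·K₀ = -1` it follows that `e = E₁` or `e = F - E₁`. The second case is
excluded by integrality: applying `φ` to `K₀ = -2T + (2h-2)F + E₁` gives
`2 φ T = 2T - E₁ + e`, which for `e = F - E₁` has odd `F`-coefficient. Hence `e = E₁`,
then `φ T = T`, and `φ` fixes a basis.
-/

namespace LiWuRuled

theorem stmt5 (h : ℤ)
    (φ : (Fin 3 → ℤ) ≃ₗ[ℤ] (Fin 3 → ℤ))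
    (hform : ∀ x y, form 1 (φ x) (φ y) = form 1 x y)
    (hK : φ (K0 1 h) = K0 1 h)
    (hF : φ (F 1) = F 1 ∨ φ (F 1) = -(F 1)) :
    ∀ x, φ x = x := by
  have hform' : ∀ x y : Fin 3 → ℤ, form 1 x y = x 0 * y 1 + x 1 * y 0 - x 2 * y 2 := by
    intro x y
    simp [form]
  have hF1 : φ (F 1) = F 1 := by
    rcases hF with hF | hF
    · exact hF
    · exfalso
      have h1 := hform (K0 1 h) (F 1)
      rw [hK, hF, hform', hform'] at h1
      simp [K0, F] at h1
  have decomp : ∀ x : Fin 3 → ℤ, x = x 0 • T 1 + x 1 • F 1 + x 2 • E 1 0 := by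
    intro x
    funext i
    fin_cases i <;> simp [T, F, E]
  have hφ : ∀ x : Fin 3 → ℤ, φ x = x 0 • φ (T 1) + x 1 • F 1 + x 2 • φ (E 1 0) := by
    intro x
    conv_lhs => rw [decomp x]
    simp only [map_add, map_smul, hF1]
  have hEF := hform (E 1 0) (F 1)
  have hEE := hform (E 1 0) (E 1 0)
  have hEK := hform (E 1 0) (K0 1 h)
  have hKφ := hφ (K0 1 h)
  rw [hF1, hform', hform'] at hEF
  rw [hform', hform'] at hEE
  rw [hK, hform', hform'] at hEK
  rw [hK] at hKφ
  have k0 := congrFun hKφ 0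
  have k1 := congrFun hKφ 1
  have k2 := congrFun hKφ 2
  generalize φ (E 1 0) = e at *
  generalize φ (T 1) = t at *
  simp [K0, F, E] at hEF hEE hEK k0 k1 k2
  rw [hEF] at hEE hEK k0
  have he2 : e 2 = 1 - 2 * e 1 := by linarith
  have he1 : e 1 * (e 1 - 1) = 0 := by
    rw [he2] at hEE
    linarith
  -- `e 1 = 1` is the case `e = F - E₁`, where the `F`-coefficient of `2 φ T` would be odd.
  have he1 : e 1 = 0 := by
    rcases mul_eq_zero.mp he1 with h1 | h1 <;> omega
  intro x
  rw [hφ x]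
  funext i
  have t0 : t 0 = 1 := by omega
  have t1 : t 1 = 0 := by omega
  have t2 : t 2 = 0 := by omega
  have e2 : e 2 = 1 := by omega
  fin_cases i <;> simp [F, t0, t1, t2, e2, he1, hEF]

end LiWuRuled
end

section
/- Let n ≥ 3 and let a, b_1, …, b_n be integers with a ≥ 1, b_1 ≥ b_2 ≥ ⋯ ≥ b_n ≥ 0, Σᵢ bᵢ = 3a and Σᵢ bᵢ² = a² + 2. Then b_1 + b_2 + b_3 > a (i.e., such a class is never reduced). -/
/-!
Suppose the class is reduced, and write `x ≥ y ≥ z` for its three largest coefficients. As all the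
other coefficients lie in `[0, z]`, each satisfies `bᵢ (bᵢ - z) ≤ 0`, whence
`∑ bᵢ² - z ∑ bᵢ ≤ x (x - z) + y (y - z)`. With `∑ bᵢ = 3a` and `a ≥ x + y + z ≥ 3z` this gives
`∑ bᵢ² ≤ 3az + x (x - z) + y (y - z) ≤ a²`, contradicting `∑ bᵢ² = a² + 2`.
-/

/-- The last inequality of the argument. The quantity `a (a - 3z)` increases with `a ≥ x + y + z`,
and at `a = x + y + z` it exceeds `x (x - z) + y (y - z)` by
`2 (x - z) (y - z) + 2z ((x - z) + (y - z))`. -/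
lemma reduced_bound {a x y z : ℤ} (hz : 0 ≤ z) (hzy : z ≤ y) (hyx : y ≤ x)
    (h : x + y + z ≤ a) : x * (x - z) + y * (y - z) ≤ a * (a - 3 * z) := by
  obtain ⟨v, hv, rfl⟩ : ∃ v, 0 ≤ v ∧ y = z + v := ⟨y - z, by lia, by ring⟩
  obtain ⟨u, hu, rfl⟩ : ∃ u, 0 ≤ u ∧ x = z + u := ⟨x - z, by lia, by ring⟩
  obtain ⟨t, ht, rfl⟩ : ∃ t, 0 ≤ t ∧ a = 3 * z + u + v + t :=
    ⟨a - (3 * z + u + v), by lia, by ring⟩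
  have key : 0 ≤ 2 * (u * v) + 2 * (z * u) + 2 * (z * v) + t * (3 * z + 2 * u + 2 * v + t) := by
    positivity
  linarith

/-- For `ξ = aH - ∑ bᵢEᵢ` with `a ≥ 1` and sorted nonnegative coefficients, the
conditions `∑ bᵢ = 3a`, `∑ bᵢ² = a² + 2` (i.e. `ξ·ξ = -2`, `K_0·ξ = 0`) force
`b₁ + b₂ + b₃ > a`: such a class is never reduced. -/
theorem stmt6 (n : ℕ) (hn : 3 ≤ n) (a : ℤ) (b : Fin n → ℤ)
    (ha : 1 ≤ a)
    (hsort : ∀ i j : Fin n, i ≤ j → b j ≤ b i)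
    (hnonneg : ∀ i, 0 ≤ b i)
    (hsum : ∑ i, b i = 3 * a)
    (hsumsq : ∑ i, b i ^ 2 = a ^ 2 + 2) :
    a < b ⟨0, by omega⟩ + b ⟨1, by omega⟩ + b ⟨2, by omega⟩ := by
  obtain ⟨m, rfl⟩ : ∃ m, n = m + 3 := ⟨n - 3, by omega⟩
  change a < b 0 + b 1 + b 2
  by_contra! hred
  have h2 : 2 % (m + 3) = 2 := Nat.mod_eq_of_lt (by omega)
  have hbound := reduced_bound (hnonneg 2) (hsort 1 2 (by simp [Fin.le_def, h2]))
    (hsort 0 1 (by simp)) hred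
  have htail : ∑ i : Fin m, b i.succ.succ.succ * (b i.succ.succ.succ - b 2) ≤ 0 := by
    refine Finset.sum_nonpos fun i _ => mul_nonpos_of_nonneg_of_nonpos (hnonneg _) ?_
    have := hsort 2 i.succ.succ.succ (by simp [Fin.le_def, h2])
    lia
  have hsplit : ∑ i, b i * (b i - b 2) = b 0 * (b 0 - b 2) + b 1 * (b 1 - b 2) +
      ∑ i : Fin m, b i.succ.succ.succ * (b i.succ.succ.succ - b 2) := by
    simp only [Fin.sum_univ_succ, Fin.succ_zero_eq_one, Fin.succ_one_eq_two]
    ring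
  have htotal : ∑ i, b i * (b i - b 2) = a ^ 2 + 2 - 3 * a * b 2 := by
    rw [← hsumsq, ← hsum, Finset.sum_mul, ← Finset.sum_sub_distrib]
    exact Finset.sum_congr rfl fun i _ => by ring
  linarith
end

section
/- Let n ≥ 4 and let a, b_1, …, b_n be integers with a ≥ 1, b_1 ≥ b_2 ≥ ⋯ ≥ b_n ≥ 0, at least four of the bᵢ nonzero, Σᵢ bᵢ = 3a and Σᵢ bᵢ² = a² + 2. Then 0 ≤ 2a − b_1 − b_2 − b_3 ≤ a − 1. (Thus applying the reflection Γ_{123} strictly decreases the positive H-coefficient while keeping it nonnegative.) -/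
/-!
Write `x ≥ y ≥ z` for the three largest coefficients and `s = x + y + z`.

Every later coefficient `c` satisfies `c ^ 2 ≤ z * c`, so
`a² + 2 ≤ x² + y² + z² + z (3a - s)`. If `s ≤ a`, then `a ≥ 3z`, where `a² - 3az` is increasing
in `a`, so `a` may be replaced by `s`; the right side minus `a²` is then at most
`2z² - 2xy ≤ 0`, a contradiction. Hence `s ≥ a + 1`.

As a fourth coefficient is nonzero, `x² + y² + z² ≤ a² + 1`. If `s ≥ 2a + 1`, then Cauchy–Schwarz
gives `(2a + 1)² ≤ 3 (a² + 1)`, i.e. `a² + 4a ≤ 2`, impossible for `a ≥ 1`. Hence `s ≤ 2a`.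
-/

/-- For `ξ = aH - ∑ bᵢEᵢ` with `a ≥ 1`, sorted nonnegative coefficients, at least
four of the `bᵢ` nonzero, `∑ bᵢ = 3a` and `∑ bᵢ² = a² + 2` (i.e. `ξ·ξ = -2`,
`K_0·ξ = 0`), one has `0 ≤ 2a - b₁ - b₂ - b₃ ≤ a - 1`: the reflection `Γ₁₂₃`
strictly decreases the positive `H`-coefficient while keeping it nonnegative. -/
theorem stmt7 (n : ℕ) (hn : 4 ≤ n) (a : ℤ) (b : Fin n → ℤ)
    (ha : 1 ≤ a)
    (hsort : ∀ i j : Fin n, i ≤ j → b j ≤ b i)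
    (hnonneg : ∀ i, 0 ≤ b i)
    (hfour : 4 ≤ (Finset.univ.filter fun i => b i ≠ 0).card)
    (hsum : ∑ i, b i = 3 * a)
    (hsumsq : ∑ i, b i ^ 2 = a ^ 2 + 2) :
    0 ≤ 2 * a - b ⟨0, by omega⟩ - b ⟨1, by omega⟩ - b ⟨2, by omega⟩ ∧
    2 * a - b ⟨0, by omega⟩ - b ⟨1, by omega⟩ - b ⟨2, by omega⟩ ≤ a - 1 := by
  obtain ⟨m, rfl⟩ : ∃ m, n = m + 1 + 1 + 1 + 1 := ⟨n - 4, by omega⟩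
  have hx : b ⟨0, by omega⟩ = b 0 := rfl
  have hy : b ⟨1, by omega⟩ = b (Fin.succ 0) := rfl
  have hz : b ⟨2, by omega⟩ = b (Fin.succ (Fin.succ 0)) := rfl
  rw [hx, hy, hz]
  have hw : 1 ≤ b (Fin.succ (Fin.succ (Fin.succ 0))) := by
    by_contra hlt
    have hsub : (Finset.univ.filter fun i => b i ≠ 0) ⊆
        Finset.Iio (Fin.succ (Fin.succ (Fin.succ 0))) := by
      intro i hi
      rw [Finset.mem_filter] at hi
      rw [Finset.mem_Iio]
      by_contra hle
      have h1 := hsort _ i (not_lt.mp hle)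
      have h2 := hnonneg i
      exact hi.2 (by omega)
    have hcard := Finset.card_le_card hsub
    rw [Fin.card_Iio] at hcard
    simp only [Fin.val_succ, Fin.val_zero] at hcard
    omega
  have hyx : b (Fin.succ 0) ≤ b 0 := hsort _ _ (Fin.zero_le _)
  have hzy : b (Fin.succ (Fin.succ 0)) ≤ b (Fin.succ 0) :=
    hsort _ _ (Fin.succ_le_succ_iff.mpr (Fin.zero_le _))
  have hz0 := hnonneg (Fin.succ (Fin.succ 0))
  have htail : ∑ i : Fin (m + 1), b i.succ.succ.succ ^ 2 ≤
      b (Fin.succ (Fin.succ 0)) * ∑ i : Fin (m + 1), b i.succ.succ.succ := by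
    rw [Finset.mul_sum]
    refine Finset.sum_le_sum fun i _ => ?_
    have h1 : b i.succ.succ.succ ≤ b (Fin.succ (Fin.succ 0)) :=
      hsort _ _ (Fin.succ_le_succ_iff.mpr (Fin.succ_le_succ_iff.mpr (Fin.zero_le _)))
    nlinarith [hnonneg i.succ.succ.succ]
  have htail1 : 1 ≤ ∑ i : Fin (m + 1), b i.succ.succ.succ ^ 2 := by
    have h1 := Finset.single_le_sum (f := fun i : Fin (m + 1) => b i.succ.succ.succ ^ 2)
      (fun i _ => sq_nonneg _) (Finset.mem_univ 0)
    have h2 : 1 ≤ b (Fin.succ (Fin.succ (Fin.succ 0))) ^ 2 := by nlinarith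
    exact h2.trans h1
  rw [Fin.sum_univ_succ, Fin.sum_univ_succ, Fin.sum_univ_succ] at hsum hsumsq
  generalize ∑ i : Fin (m + 1), b i.succ.succ.succ ^ 2 = Q at *
  generalize ∑ i : Fin (m + 1), b i.succ.succ.succ = T at *
  generalize b (Fin.succ (Fin.succ 0)) = z at *
  generalize b (Fin.succ 0) = y at *
  generalize b 0 = x at *
  constructor
  · by_contra hneg
    have hs : 2 * a + 1 ≤ x + y + z := by omega
    nlinarith [sq_nonneg (x - y), sq_nonneg (y - z), sq_nonneg (x - z),
      mul_self_le_mul_self (by omega : 0 ≤ 2 * a + 1) hs]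
  · by_contra hneg
    have hs : x + y + z ≤ a := by omega
    have hT : T = 3 * a - x - y - z := by omega
    subst hT
    have hxy : z * z ≤ x * y := mul_le_mul (by omega) hzy hz0 (by omega)
    -- `a² - 3az ≥ s² - 3sz` for `a ≥ s ≥ 3z`
    have hmono : 0 ≤ (a - (x + y + z)) * (a + (x + y + z) - 3 * z) :=
      mul_nonneg (by omega) (by omega)
    nlinarith
end

section
/- Let n ≥ 3 and let a, b_1, …, b_n be integers with a ≥ 1, b_1 ≥ b_2 ≥ ⋯ ≥ b_n ≥ 0, Σᵢ bᵢ = 3a − 1 and Σᵢ bᵢ² = a² + 1. Then b_1 + b_2 + b_3 > a (i.e., such a class is never reduced). -/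
/-!
Write `x ≥ y ≥ z` for the three largest coefficients and suppose `x + y + z ≤ a`. Every later
coefficient lies in `[0, z]`, so `bᵢ² - z bᵢ ≤ 0` there, and summing `bᵢ² - z bᵢ` over all `i` gives
`a² + 1 - z (3a - 1) ≤ x (x - z) + y (y - z)`. By convexity the right side is at most
`(a - 2z)(a - 3z)` (its value at `x = a - 2z`, `y = z`). Hence `1 + z + 2z (a - 3z) ≤ 0`, which is
impossible because `z ≥ 0` and `a ≥ 3z`.
-/


/-- For `ξ = aH - ∑ bᵢEᵢ` with `a ≥ 1` and sorted nonnegative coefficients, the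
conditions `∑ bᵢ = 3a - 1`, `∑ bᵢ² = a² + 1` (i.e. `ξ·ξ = -1`, `K_0·ξ = -1`) force
`b₁ + b₂ + b₃ > a`: such a class is never reduced. -/
theorem stmt8 (n : ℕ) (hn : 3 ≤ n) (a : ℤ) (b : Fin n → ℤ)
    (ha : 1 ≤ a)
    (hsort : ∀ i j : Fin n, i ≤ j → b j ≤ b i)
    (hnonneg : ∀ i, 0 ≤ b i)
    (hsum : ∑ i, b i = 3 * a - 1)
    (hsumsq : ∑ i, b i ^ 2 = a ^ 2 + 1) :
    a < b ⟨0, by omega⟩ + b ⟨1, by omega⟩ + b ⟨2, by omega⟩ := by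
  obtain ⟨m, rfl⟩ : ∃ m, n = m + 3 := ⟨n - 3, by omega⟩
  by_contra! hred
  change b 0 + b 1 + b 2 ≤ a at hred
  have h2 : 2 % (m + 3) = 2 := Nat.mod_eq_of_lt (by omega)
  have hxy : b 1 ≤ b 0 := hsort 0 1 (by simp)
  have hyz : b 2 ≤ b 1 := hsort 1 2 (by simp [Fin.le_def, h2]; try omega)
  have hz : 0 ≤ b 2 := hnonneg 2
  have htail : ∑ i : Fin m, (b i.succ.succ.succ ^ 2 - b 2 * b i.succ.succ.succ) ≤ 0 := by
    refine Finset.sum_nonpos fun i _ => ?_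
    have h1 : b i.succ.succ.succ ≤ b 2 :=
      hsort _ _ (by simp [Fin.le_def, h2]; try omega)
    nlinarith [hnonneg i.succ.succ.succ]
  rw [Finset.sum_sub_distrib, ← Finset.mul_sum] at htail
  simp only [Fin.sum_univ_succ (n := m + 2), Fin.sum_univ_succ (n := m + 1),
    Fin.sum_univ_succ (n := m)] at hsum hsumsq
  change b 0 + (b 1 + (b 2 + _)) = _ at hsum
  change b 0 ^ 2 + (b 1 ^ 2 + (b 2 ^ 2 + _)) = _ at hsumsq
  generalize ∑ i : Fin m, b i.succ.succ.succ = S at *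
  generalize ∑ i : Fin m, b i.succ.succ.succ ^ 2 = Q at *
  generalize b 0 = x at *
  generalize b 1 = y at *
  generalize b 2 = z at *
  have hkey : a ^ 2 + 1 - z * (3 * a - 1) ≤ x * (x - z) + y * (y - z) := by
    rw [← hsum, ← hsumsq]
    linarith
  -- With `p = x - z`, `q = y - z`, the left side is `z (p + q) + p² + q²`, and `p + q ≤ a - 3z`.
  have hconv : x * (x - z) + y * (y - z) ≤ (a - 2 * z) * (a - 3 * z) := by
    obtain ⟨p, rfl⟩ : ∃ p, x = z + p := ⟨x - z, by ring⟩
    obtain ⟨q, rfl⟩ : ∃ q, y = z + q := ⟨y - z, by ring⟩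
    obtain ⟨r, rfl⟩ : ∃ r, a = 3 * z + p + q + r := ⟨a - 3 * z - p - q, by ring⟩
    have hq : 0 ≤ q := by linarith
    have hp : 0 ≤ p := by linarith
    have hr : 0 ≤ r := by linarith
    nlinarith [mul_nonneg hp hq, mul_nonneg hp hr, mul_nonneg hq hr, mul_nonneg hz hr]
  have h3z : 0 ≤ a - 3 * z := by linarith
  nlinarith [mul_nonneg hz h3z]
end

section
/- Let n ≥ 3 and let a, b_1, …, b_n be integers with a ≥ 1, b_1 ≥ b_2 ≥ ⋯ ≥ b_n ≥ 0, Σᵢ bᵢ = 3a − 1 and Σᵢ bᵢ² = a² + 1. Then 0 ≤ 2a − b_1 − b_2 − b_3 ≤ a − 1. (Thus applying the reflection Γ_{123} strictly decreases the positive H-coefficient while keeping it nonnegative.) -/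
/-!
Write `x ≥ y ≥ z` for the three largest coefficients.

Lower bound: by Cauchy–Schwarz `(x + y + z)² ≤ 3 (a² + 1) < (2a + 1)²` for `a ≥ 1`.

Upper bound: every other coefficient satisfies `bᵢ² ≤ z bᵢ`, whence
`a² + 1 ≤ x (x - z) + y (y - z) + z (3a - 1)`. If `x + y + z ≤ a`, put `s = (x - z) + (y - z)`,
so `0 ≤ s ≤ a - 3z`; then the right side is at most
`s² + z s + z (3a - 1) ≤ (a - 3z)(a - 2z) + z (3a - 1) = a² - 2z (a - 3z) - z ≤ a²`,
a contradiction.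
-/

/-- For `ξ = aH - ∑ bᵢEᵢ` with `a ≥ 1`, sorted nonnegative coefficients,
`∑ bᵢ = 3a - 1` and `∑ bᵢ² = a² + 1` (i.e. `ξ·ξ = -1`, `K_0·ξ = -1`), one has
`0 ≤ 2a - b₁ - b₂ - b₃ ≤ a - 1`: the reflection `Γ₁₂₃` strictly decreases the
positive `H`-coefficient while keeping it nonnegative. -/
theorem stmt9 (n : ℕ) (hn : 3 ≤ n) (a : ℤ) (b : Fin n → ℤ)
    (ha : 1 ≤ a)
    (hsort : ∀ i j : Fin n, i ≤ j → b j ≤ b i)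
    (hnonneg : ∀ i, 0 ≤ b i)
    (hsum : ∑ i, b i = 3 * a - 1)
    (hsumsq : ∑ i, b i ^ 2 = a ^ 2 + 1) :
    0 ≤ 2 * a - b ⟨0, by omega⟩ - b ⟨1, by omega⟩ - b ⟨2, by omega⟩ ∧
    2 * a - b ⟨0, by omega⟩ - b ⟨1, by omega⟩ - b ⟨2, by omega⟩ ≤ a - 1 := by
  obtain ⟨m, rfl⟩ : ∃ m, n = m + 3 := ⟨n - 3, by omega⟩
  simp only [Fin.sum_univ_succ] at hsum hsumsq
  have h01 := hsort ⟨0, by omega⟩ ⟨1, by omega⟩ (by simp [Fin.le_def])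
  have h12 := hsort ⟨1, by omega⟩ ⟨2, by omega⟩ (by simp [Fin.le_def])
  have hz := hnonneg ⟨2, by omega⟩
  have htail : ∑ i : Fin m, b i.succ.succ.succ ^ 2
      ≤ b ⟨2, by omega⟩ * ∑ i : Fin m, b i.succ.succ.succ := by
    rw [Finset.mul_sum]
    refine Finset.sum_le_sum fun i _ => ?_
    have h := hsort ⟨2, by omega⟩ i.succ.succ.succ (by simp [Fin.le_def])
    nlinarith [hnonneg i.succ.succ.succ]
  have htail0 : 0 ≤ ∑ i : Fin m, b i.succ.succ.succ ^ 2 :=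
    Finset.sum_nonneg fun i _ => sq_nonneg _
  have e0 : b 0 = b ⟨0, by omega⟩ := rfl
  have e1 : b (Fin.succ 0) = b ⟨1, by omega⟩ := rfl
  have e2 : b (Fin.succ (Fin.succ 0)) = b ⟨2, by omega⟩ := rfl
  rw [e0, e1, e2] at hsum hsumsq
  generalize b ⟨0, by omega⟩ = x at *
  generalize b ⟨1, by omega⟩ = y at *
  generalize b ⟨2, by omega⟩ = z at *
  generalize ∑ i : Fin m, b i.succ.succ.succ ^ 2 = Q at *
  generalize ∑ i : Fin m, b i.succ.succ.succ = S at *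
  constructor
  · by_contra! h
    nlinarith [sq_nonneg (x - y), sq_nonneg (y - z), sq_nonneg (x - z)]
  · by_contra! h
    obtain rfl : S = 3 * a - 1 - x - y - z := by linarith
    have hmain : a ^ 2 + 1 ≤ x * (x - z) + y * (y - z) + z * (3 * a - 1) := by
      nlinarith
    have huv : 0 ≤ (x - z) * (y - z) := mul_nonneg (by linarith) (by linarith)
    -- `t` is the slack in `s ≤ a - 3z`, where `s = (x - z) + (y - z)`.
    obtain ⟨t, ht⟩ : ∃ t, t = a - x - y - z := ⟨_, rfl⟩
    have ht0 : 0 ≤ t := by linarith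
    obtain ⟨s, hs⟩ : ∃ s, s = (x - z) + (y - z) := ⟨_, rfl⟩
    have hs0 : 0 ≤ s := by linarith
    have hbound : a ^ 2 + 1 ≤ s ^ 2 + z * s + z * (3 * a - 1) := by
      subst hs; nlinarith
    obtain rfl : a = s + 3 * z + t := by linarith
    nlinarith [mul_nonneg hs0 hz, mul_nonneg ht0 hz, mul_nonneg hs0 ht0]
end

section
/- Let n ≥ 3, let a ≥ 0 be an integer, and let b_1 ≥ b_2 ≥ ⋯ ≥ b_n ≥ 0 be integers with b_1 + b_2 + b_3 ≤ a and Σᵢ bᵢ ≤ 3a. Then Σᵢ bᵢ² ≤ a(b_1 + b_2 + b_3) ≤ a². -/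
/-!
Write `x ≥ y ≥ z` for the three largest coefficients and `s = x + y + z`. Every later coefficient
`t` satisfies `t ^ 2 ≤ z * t`, so the tail contributes at most `z * (3 * a - s)` to the sum of
squares. It remains to see that `x ^ 2 + y ^ 2 + z ^ 2 + z * (3 * a - s) ≤ a * s`. The difference
of the two sides has coefficient `s - 3 * z ≥ 0` in `a`, so it is smallest at `a = s`, where it
equals `2 * (x * y - z ^ 2) ≥ 0`.
-/

/-- Let `a ≥ 0` and `b₁ ≥ b₂ ≥ ⋯ ≥ bₙ ≥ 0` (`n ≥ 3`) be integers with
`b₁ + b₂ + b₃ ≤ a` and `∑ bᵢ ≤ 3a`.  Then `∑ bᵢ² ≤ a(b₁ + b₂ + b₃) ≤ a²`. -/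
theorem stmt13 (n : ℕ) (hn : 3 ≤ n) (a : ℤ) (ha : 0 ≤ a) (b : Fin n → ℤ)
    (hsort : ∀ i j : Fin n, i ≤ j → b j ≤ b i)
    (hnonneg : ∀ i, 0 ≤ b i)
    (hred : b ⟨0, by omega⟩ + b ⟨1, by omega⟩ + b ⟨2, by omega⟩ ≤ a)
    (hsum : ∑ i, b i ≤ 3 * a) :
    ∑ i, b i ^ 2 ≤ a * (b ⟨0, by omega⟩ + b ⟨1, by omega⟩ + b ⟨2, by omega⟩) ∧
    a * (b ⟨0, by omega⟩ + b ⟨1, by omega⟩ + b ⟨2, by omega⟩) ≤ a ^ 2 := by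
  obtain ⟨m, rfl⟩ : ∃ m, n = m + 3 := ⟨n - 3, by omega⟩
  have hxy := hsort ⟨0, by omega⟩ ⟨1, by omega⟩ (by simp [Fin.le_def])
  have hyz := hsort ⟨1, by omega⟩ ⟨2, by omega⟩ (by simp [Fin.le_def])
  have hz := hnonneg ⟨2, by omega⟩
  have htail : ∑ i : Fin m, b i.succ.succ.succ ^ 2
      ≤ b ⟨2, by omega⟩ * ∑ i : Fin m, b i.succ.succ.succ := by
    rw [Finset.mul_sum]
    refine Finset.sum_le_sum fun i _ => ?_
    have h1 := hsort ⟨2, by omega⟩ i.succ.succ.succ (by simp [Fin.le_def])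
    rw [sq]
    exact mul_le_mul_of_nonneg_right h1 (hnonneg _)
  have e0 : (0 : Fin (m + 3)) = ⟨0, by omega⟩ := rfl
  have e1 : (Fin.succ 0 : Fin (m + 3)) = ⟨1, by omega⟩ := rfl
  have e2 : (Fin.succ (Fin.succ 0) : Fin (m + 3)) = ⟨2, by omega⟩ := rfl
  rw [Fin.sum_univ_succ, Fin.sum_univ_succ, Fin.sum_univ_succ, e0, e1, e2] at hsum ⊢
  generalize b ⟨0, _⟩ = x at *
  generalize b ⟨1, _⟩ = y at *
  generalize b ⟨2, _⟩ = z at *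
  generalize ∑ i : Fin m, b i.succ.succ.succ = T at *
  constructor
  · have hT : z * T ≤ z * (3 * a - (x + y + z)) :=
      mul_le_mul_of_nonneg_left (by linarith) hz
    have hslope : 0 ≤ (a - (x + y + z)) * (x + y + z - 3 * z) :=
      mul_nonneg (by linarith) (by linarith)
    have hprod : z * z ≤ x * y := mul_le_mul (by linarith) hyz hz (by linarith)
    linarith
  · rw [sq]
    exact mul_le_mul_of_nonneg_left hred ha
end
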